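/- arXiv:1705.07039 — 2 statements merged into one kernel-verified Lean document; each statement's English description precedes it below -/
import Mathlib

section
/- Let X be a real inner product space and let x, y ∈ X be linearly independent with ⟨x,y⟩ ≥ 0. Then the angular distance satisfies α_0[x,y] = (√(‖x‖²‖y‖² − ⟨x,y⟩²)/(‖x‖‖y‖)) · Σ_{k=0}^∞ C(1/2, k) · ( (‖x‖‖y‖ − ⟨x,y⟩)/(‖x‖‖y‖ + ⟨x,y⟩) )^k, where C(1/2, k) = (∏_{i=0}^{k−1} (1/2 − i)) / k! is the generalized binomial coefficient. -/
open scoped RealInnerProductSpace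

/-- The `p`-angular distance `α_p[x,y] = ‖‖x‖^(p-1) • x - ‖y‖^(p-1) • y‖`. -/
noncomputable def alphaD {X : Type*} [NormedAddCommGroup X] [NormedSpace ℝ X]
    (p : ℝ) (x y : X) : ℝ :=
  ‖(‖x‖ ^ (p - 1)) • x - (‖y‖ ^ (p - 1)) • y‖

/-- The generalized binomial coefficient `C(r, k) = (∏_{i=0}^{k-1} (r - i)) / k!`. -/
noncomputable def genBinom (r : ℝ) (k : ℕ) : ℝ :=
  (∏ i ∈ Finset.range k, (r - i)) / (Nat.factorial k : ℝ)

/-!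
If `θ` is the angle between `x` and `y`, then `α_0[x,y] = 2 sin (θ/2) = sin θ / cos (θ/2)`, that is,
`sin θ * √(1 + tan² (θ/2))` with `tan² (θ/2) = (1 - cos θ) / (1 + cos θ)`. For `cos θ ≥ 0` this
tangent square lies in `[0, 1]`, so the square root is the sum of its binomial series. The endpoint
`1` occurs when `x ⊥ y`; there the binomial series is summed by continuity, because for `r > 0` the
coefficients `C(r, k)` are absolutely summable: `r * |C(r, k)|` telescopes once `k ≥ r`.
-/

section BinomialSeries

variable {r : ℝ}

theorem genBinom_eq_choose (r : ℝ) (k : ℕ) : genBinom r k = Ring.choose r k := by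
  rw [genBinom, Ring.choose_eq_smul, ← Polynomial.aeval_eq_smeval, Polynomial.aeval_def,
    Polynomial.eval₂_eq_eval_map, descPochhammer_map, descPochhammer_eval_eq_prod_range,
    smul_eq_mul, div_eq_inv_mul]

theorem add_one_mul_genBinom_succ (r : ℝ) (k : ℕ) :
    (k + 1) * genBinom r (k + 1) = (r - k) * genBinom r k := by
  rw [genBinom, genBinom, Finset.prod_range_succ, Nat.factorial_succ]
  push_cast
  field_simp

theorem mul_abs_genBinom_eq_sub {k : ℕ} (hrk : r ≤ k) :
    r * |genBinom r k| = k * |genBinom r k| - (k + 1) * |genBinom r (k + 1)| := by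
  have habs : (k + 1) * |genBinom r (k + 1)| = (k - r) * |genBinom r k| := by
    rw [← abs_of_nonneg (by positivity : (0 : ℝ) ≤ k + 1), ← abs_mul, add_one_mul_genBinom_succ,
      abs_mul, abs_sub_comm, abs_of_nonneg (sub_nonneg.2 hrk)]
  linarith

theorem mul_sum_abs_genBinom_eq_sub {N : ℕ} (hrN : r ≤ N) (n : ℕ) :
    r * ∑ k ∈ Finset.range n, |genBinom r (k + N)| =
      N * |genBinom r N| - (n + N : ℕ) * |genBinom r (n + N)| := by
  induction n with
  | zero => simp
  | succ n ih =>
    have hstep := mul_abs_genBinom_eq_sub (hrN.trans (Nat.cast_le.2 (Nat.le_add_left N n)))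
    rw [Finset.sum_range_succ, mul_add, ih, hstep, Nat.add_right_comm n 1 N]
    push_cast
    ring

theorem summable_abs_genBinom (hr : 0 < r) : Summable fun k ↦ |genBinom r k| := by
  rw [← summable_nat_add_iff ⌈r⌉₊]
  refine summable_of_sum_range_le (c := ⌈r⌉₊ * |genBinom r ⌈r⌉₊| / r) (fun _ ↦ abs_nonneg _)
    fun n ↦ ?_
  rw [le_div_iff₀' hr, mul_sum_abs_genBinom_eq_sub (Nat.le_ceil r)]
  exact sub_le_self _ (by positivity)

theorem norm_genBinom_mul_pow_le (r : ℝ) (k : ℕ) {t : ℝ} (ht : |t| ≤ 1) :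
    ‖genBinom r k * t ^ k‖ ≤ |genBinom r k| := by
  rw [Real.norm_eq_abs, abs_mul, abs_pow]
  exact mul_le_of_le_one_right (abs_nonneg _) (pow_le_one₀ (abs_nonneg t) ht)

theorem hasSum_genBinom_mul_pow_of_abs_lt_one (r : ℝ) {t : ℝ} (ht : |t| < 1) :
    HasSum (fun k ↦ genBinom r k * t ^ k) ((1 + t) ^ r) := by
  have hmem : t ∈ Metric.eball (0 : ℝ) 1 := by
    rwa [← ENNReal.ofReal_one, Metric.eball_ofReal, mem_ball_zero_iff]
  simpa [binomialSeries, genBinom_eq_choose, mul_comm] using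
    Real.one_add_rpow_hasFPowerSeriesOnBall_zero.hasSum hmem

theorem tsum_genBinom_mul_pow (hr : 0 < r) {t : ℝ} (ht : |t| ≤ 1) :
    ∑' k, genBinom r k * t ^ k = (1 + t) ^ r := by
  have hseries : ContinuousOn (fun s : ℝ ↦ ∑' k, genBinom r k * s ^ k) (Set.Icc (-1) 1) :=
    continuousOn_tsum (fun k ↦ by fun_prop) (summable_abs_genBinom hr)
      fun k _ hs ↦ norm_genBinom_mul_pow_le r k (abs_le.2 hs)
  have hpower : ContinuousOn (fun s : ℝ ↦ (1 + s) ^ r) (Set.Icc (-1) 1) :=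
    ContinuousOn.rpow_const (by fun_prop) fun _ _ ↦ Or.inr hr.le
  have hinterior : Set.EqOn (fun s : ℝ ↦ ∑' k, genBinom r k * s ^ k) (fun s ↦ (1 + s) ^ r)
      (Set.Ioo (-1) 1) :=
    fun _ hs ↦ (hasSum_genBinom_mul_pow_of_abs_lt_one r (abs_lt.2 hs)).tsum_eq
  exact hinterior.of_subset_closure hseries hpower Set.Ioo_subset_Icc_self
    (closure_Ioo (by norm_num)).ge (abs_le.1 ht)

theorem hasSum_genBinom_mul_pow (hr : 0 < r) {t : ℝ} (ht : |t| ≤ 1) :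
    HasSum (fun k ↦ genBinom r k * t ^ k) ((1 + t) ^ r) := by
  have hsummable : Summable fun k ↦ genBinom r k * t ^ k :=
    (summable_abs_genBinom hr).of_norm_bounded fun k ↦ norm_genBinom_mul_pow_le r k ht
  exact tsum_genBinom_mul_pow hr ht ▸ hsummable.hasSum

end BinomialSeries

/-- The half-angle identity `2 sin (θ/2) = sin θ * √(1 + tan² (θ/2))`, with `cos θ = c / m`. -/
theorem sqrt_two_mul_one_sub_div {m c : ℝ} (hm : 0 < m) (hmc : 0 < m + c) (hcm : c ≤ m) :
    √(2 * (1 - c / m)) = √(m ^ 2 - c ^ 2) / m * √(1 + (m - c) / (m + c)) := by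
  have hsin : 0 ≤ m ^ 2 - c ^ 2 := sq_sub_sq m c ▸ mul_nonneg hmc.le (sub_nonneg.2 hcm)
  calc √(2 * (1 - c / m)) = √((m ^ 2 - c ^ 2) / m ^ 2 * (1 + (m - c) / (m + c))) := by
        congr 1
        field_simp
        ring
    _ = √(m ^ 2 - c ^ 2) / m * √(1 + (m - c) / (m + c)) := by
        rw [Real.sqrt_mul (by positivity), Real.sqrt_div hsin, Real.sqrt_sq hm.le]

theorem abs_sub_div_add_le_one {m c : ℝ} (hc : 0 ≤ c) (hcm : c ≤ m) :
    |(m - c) / (m + c)| ≤ 1 := by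
  rw [abs_of_nonneg (div_nonneg (by linarith) (by linarith))]
  exact div_le_one_of_le₀ (by linarith) (by linarith)

section AngularDistance

variable {X : Type*} [NormedAddCommGroup X] [InnerProductSpace ℝ X] {x y : X}

theorem alphaD_sq (p : ℝ) (hx : x ≠ 0) (hy : y ≠ 0) :
    alphaD p x y ^ 2 =
      (‖x‖ ^ p) ^ 2 - 2 * (‖x‖ ^ (p - 1) * ‖y‖ ^ (p - 1) * ⟪x, y⟫) + (‖y‖ ^ p) ^ 2 := by
  have norm_rpow_smul {z : X} (hz : z ≠ 0) : ‖‖z‖ ^ (p - 1) • z‖ = ‖z‖ ^ p := by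
    rw [norm_smul, Real.norm_of_nonneg (by positivity), Real.rpow_sub_one (norm_ne_zero_iff.2 hz),
      div_mul_cancel₀ _ (norm_ne_zero_iff.2 hz)]
  rw [alphaD, norm_sub_sq_real, norm_rpow_smul hx, norm_rpow_smul hy, real_inner_smul_left,
    real_inner_smul_right, mul_assoc (‖x‖ ^ (p - 1))]

theorem alphaD_zero_eq_sqrt (hx : x ≠ 0) (hy : y ≠ 0) :
    alphaD 0 x y = √(2 * (1 - ⟪x, y⟫ / (‖x‖ * ‖y‖))) := by
  rw [← Real.sqrt_sq (show 0 ≤ alphaD 0 x y from norm_nonneg _), alphaD_sq 0 hx hy]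
  simp only [zero_sub, Real.rpow_neg_one, Real.rpow_zero]
  congr 1
  field_simp
  ring

theorem stmt_11_general (hx : x ≠ 0) (hy : y ≠ 0) (hxy : 0 ≤ ⟪x, y⟫) :
    HasSum
      (fun k ↦ √(‖x‖ ^ 2 * ‖y‖ ^ 2 - ⟪x, y⟫ ^ 2) / (‖x‖ * ‖y‖) *
        (genBinom (1 / 2) k * ((‖x‖ * ‖y‖ - ⟪x, y⟫) / (‖x‖ * ‖y‖ + ⟪x, y⟫)) ^ k))
      (alphaD 0 x y) := by
  have hpos : 0 < ‖x‖ * ‖y‖ := by positivity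
  have hcs : ⟪x, y⟫ ≤ ‖x‖ * ‖y‖ := real_inner_le_norm x y
  rw [alphaD_zero_eq_sqrt hx hy, sqrt_two_mul_one_sub_div hpos (by linarith) hcs, mul_pow,
    Real.sqrt_eq_rpow (1 + _)]
  exact (hasSum_genBinom_mul_pow one_half_pos (abs_sub_div_add_le_one hxy hcs)).mul_left _

end AngularDistance

theorem stmt_11 {X : Type*} [NormedAddCommGroup X] [InnerProductSpace ℝ X]
    (x y : X) (h : LinearIndependent ℝ ![x, y]) (hxy : 0 ≤ ⟪x, y⟫) :
    alphaD 0 x y =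
      (Real.sqrt (‖x‖ ^ 2 * ‖y‖ ^ 2 - ⟪x, y⟫ ^ 2) / (‖x‖ * ‖y‖)) *
        ∑' k : ℕ, genBinom (1 / 2) k *
          ((‖x‖ * ‖y‖ - ⟪x, y⟫) / (‖x‖ * ‖y‖ + ⟪x, y⟫)) ^ k := by
  rw [← tsum_mul_left]
  exact (stmt_11_general (h.ne_zero 0) (h.ne_zero 1) hxy).tsum_eq.symm
end

section
/- Let p, q be real numbers with q ≠ 0 and p/q ≥ 1. Then for all nonzero x, y ∈ X, (p/(2p − q)) · max(‖x‖^(p−q), ‖y‖^(p−q)) · α_q[x,y] ≤ α_p[x,y] ≤ (p/q) · max(‖x‖^(p−q), ‖y‖^(p−q)) · α_q[x,y]. -/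
/-!
The radial maps `R_q x = ‖x‖ ^ (q - 1) • x` satisfy `‖R_q x‖ = ‖x‖ ^ q` and
`R_r ∘ R_q = R_(q * r)`, so replacing `x, y` by `R_q x, R_q y` reduces the theorem to exponents
`r = p / q ≥ 1` and `1`. There, with `‖v‖ ≤ ‖u‖`, the distances `‖R_r u - R_r v‖` and
`‖u‖ ^ (r - 1) * ‖u - v‖` differ by at most `(‖u‖ ^ (r - 1) - ‖v‖ ^ (r - 1)) * ‖v‖`. The weighted
AM-GM inequality bounds this error by a multiple of either distance.
-/

section SMul

variable {𝕜 E : Type*} [SeminormedRing 𝕜] [SeminormedAddCommGroup E] [Module 𝕜 E]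

lemma norm_smul_sub_smul_le [IsBoundedSMul 𝕜 E] (a b : 𝕜) (u v : E) :
    ‖a • u - b • v‖ ≤ ‖a‖ * ‖u - v‖ + ‖a - b‖ * ‖v‖ :=
  calc ‖a • u - b • v‖ = ‖a • (u - v) + (a - b) • v‖ := by
        rw [smul_sub, sub_smul, sub_add_sub_cancel]
    _ ≤ ‖a • (u - v)‖ + ‖(a - b) • v‖ := norm_add_le _ _
    _ ≤ ‖a‖ * ‖u - v‖ + ‖a - b‖ * ‖v‖ := add_le_add (norm_smul_le _ _) (norm_smul_le _ _)

lemma norm_mul_norm_sub_le [NormSMulClass 𝕜 E] (a b : 𝕜) (u v : E) :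
    ‖a‖ * ‖u - v‖ ≤ ‖a • u - b • v‖ + ‖a - b‖ * ‖v‖ :=
  calc ‖a‖ * ‖u - v‖ = ‖(a • u - b • v) - (a - b) • v‖ := by
        rw [← norm_smul, smul_sub, sub_smul, sub_sub_sub_cancel_right]
    _ ≤ ‖a • u - b • v‖ + ‖(a - b) • v‖ := norm_sub_le _ _
    _ = ‖a • u - b • v‖ + ‖a - b‖ * ‖v‖ := by rw [norm_smul]

end SMul

section Rpow

variable {r s t : ℝ}

lemma rpow_sub_one_mul_self (hs : 0 ≤ s) (hr : r ≠ 0) : s ^ (r - 1) * s = s ^ r := by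
  rw [← Real.rpow_add_one' hs (by rwa [sub_add_cancel]), sub_add_cancel]

lemma mul_mul_rpow_sub_one_le (hr : 1 ≤ r) (hs : 0 ≤ s) (ht : 0 ≤ t) :
    r * (s * t ^ (r - 1)) ≤ s ^ r + (r - 1) * t ^ r := by
  have hr₀ : 0 < r := by positivity
  have amgm : (s ^ r) ^ r⁻¹ * (t ^ r) ^ (1 - r⁻¹) ≤ r⁻¹ * s ^ r + (1 - r⁻¹) * t ^ r :=
    Real.geom_mean_le_arith_mean2_weighted (by positivity) (sub_nonneg.2 (inv_le_one_of_one_le₀ hr))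
      (by positivity) (by positivity) (by ring)
  have exponent : r * (1 - r⁻¹) = r - 1 := by field_simp
  rw [Real.rpow_rpow_inv hs hr₀.ne', ← Real.rpow_mul ht, exponent] at amgm
  calc r * (s * t ^ (r - 1)) ≤ r * (r⁻¹ * s ^ r + (1 - r⁻¹) * t ^ r) := by gcongr
    _ = s ^ r + (r - 1) * t ^ r := by field_simp

lemma rpow_sub_one_sub_rpow_sub_one_mul_le (hr : 1 ≤ r) (hs : 0 ≤ s) (ht : 0 ≤ t) :
    (t ^ (r - 1) - s ^ (r - 1)) * s ≤ (r - 1) * (t ^ (r - 1) * (t - s)) := by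
  have hr₀ : r ≠ 0 := by positivity
  have young := mul_mul_rpow_sub_one_le hr hs ht
  rw [← rpow_sub_one_mul_self hs hr₀, ← rpow_sub_one_mul_self ht hr₀] at young
  linarith

lemma mul_rpow_sub_one_sub_rpow_sub_one_mul_le (hr : 1 ≤ r) (hs : 0 ≤ s) (ht : 0 ≤ t) :
    r * ((t ^ (r - 1) - s ^ (r - 1)) * s) ≤ (r - 1) * (t ^ r - s ^ r) := by
  have young := mul_mul_rpow_sub_one_le hr hs ht
  have power := rpow_sub_one_mul_self hs (by positivity : r ≠ 0)
  linear_combination young - r * power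

end Rpow

section AngularDistance

variable {X : Type*} [NormedAddCommGroup X] [NormedSpace ℝ X] {q r : ℝ}

/-- The radial map that keeps directions and raises norms to the power `q`; `alphaD q x y` is the
distance between the images of `x` and `y`. It fixes `0` for every `q`. -/
noncomputable def radialPow (q : ℝ) (x : X) : X :=
  ‖x‖ ^ (q - 1) • x

lemma alphaD_eq_norm_radialPow_sub (q : ℝ) (x y : X) :
    alphaD q x y = ‖radialPow q x - radialPow q y‖ :=
  rfl

lemma alphaD_comm (q : ℝ) (x y : X) : alphaD q x y = alphaD q y x :=
  norm_sub_rev _ _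

lemma norm_radialPow (hq : q ≠ 0) (x : X) : ‖radialPow q x‖ = ‖x‖ ^ q := by
  rw [radialPow, norm_smul, Real.norm_of_nonneg (by positivity),
    rpow_sub_one_mul_self (norm_nonneg x) hq]

lemma norm_radialPow_rpow_sub_one (hq : q ≠ 0) (r : ℝ) (x : X) :
    ‖radialPow q x‖ ^ (r - 1) = ‖x‖ ^ (q * r - q) := by
  rw [norm_radialPow hq, ← Real.rpow_mul (norm_nonneg x), mul_sub_one]

lemma radialPow_radialPow (hq : q ≠ 0) (r : ℝ) (x : X) :
    radialPow r (radialPow q x) = radialPow (q * r) x := by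
  obtain rfl | hx := eq_or_ne x 0
  · simp [radialPow]
  · rw [radialPow, norm_radialPow_rpow_sub_one hq, radialPow, radialPow, smul_smul,
      ← Real.rpow_add (norm_pos_iff.2 hx), sub_add_sub_cancel]

lemma alphaD_radialPow (hq : q ≠ 0) (r : ℝ) (x y : X) :
    alphaD r (radialPow q x) (radialPow q y) = alphaD (q * r) x y := by
  simp only [alphaD_eq_norm_radialPow_sub, radialPow_radialPow hq]

lemma alphaD_le_mul_max_mul_norm_sub (hr : 1 ≤ r) (u v : X) :
    alphaD r u v ≤ r * max (‖u‖ ^ (r - 1)) (‖v‖ ^ (r - 1)) * ‖u - v‖ := by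
  wlog h : ‖v‖ ≤ ‖u‖ generalizing u v
  · rw [alphaD_comm, max_comm, norm_sub_rev]
    exact this v u (le_of_not_ge h)
  have hweight : ‖v‖ ^ (r - 1) ≤ ‖u‖ ^ (r - 1) :=
    Real.rpow_le_rpow (norm_nonneg v) h (sub_nonneg.2 hr)
  rw [max_eq_left hweight]
  set a := ‖u‖ ^ (r - 1)
  set b := ‖v‖ ^ (r - 1)
  have ha : 0 ≤ a := by positivity
  have compare : alphaD r u v ≤ a * ‖u - v‖ + (a - b) * ‖v‖ := by
    simpa only [alphaD, Real.norm_of_nonneg ha, Real.norm_of_nonneg (sub_nonneg.2 hweight)]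
      using norm_smul_sub_smul_le a b u v
  calc alphaD r u v ≤ a * ‖u - v‖ + (a - b) * ‖v‖ := compare
    _ ≤ a * ‖u - v‖ + (r - 1) * (a * (‖u‖ - ‖v‖)) := by
        gcongr a * ‖u - v‖ + ?_
        exact rpow_sub_one_sub_rpow_sub_one_mul_le hr (norm_nonneg v) (norm_nonneg u)
    _ ≤ a * ‖u - v‖ + (r - 1) * (a * ‖u - v‖) := by
        gcongr
        exact norm_sub_norm_le u v
    _ = r * a * ‖u - v‖ := by ring

lemma div_mul_max_mul_norm_sub_le_alphaD (hr : 1 ≤ r) (u v : X) :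
    r / (2 * r - 1) * max (‖u‖ ^ (r - 1)) (‖v‖ ^ (r - 1)) * ‖u - v‖ ≤ alphaD r u v := by
  wlog h : ‖v‖ ≤ ‖u‖ generalizing u v
  · rw [alphaD_comm, max_comm, norm_sub_rev]
    exact this v u (le_of_not_ge h)
  have hweight : ‖v‖ ^ (r - 1) ≤ ‖u‖ ^ (r - 1) :=
    Real.rpow_le_rpow (norm_nonneg v) h (sub_nonneg.2 hr)
  rw [max_eq_left hweight]
  set a := ‖u‖ ^ (r - 1)
  set b := ‖v‖ ^ (r - 1)
  have ha : 0 ≤ a := by positivity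
  have hr₀ : r ≠ 0 := by positivity
  have compare : a * ‖u - v‖ ≤ alphaD r u v + (a - b) * ‖v‖ := by
    simpa only [alphaD, Real.norm_of_nonneg ha, Real.norm_of_nonneg (sub_nonneg.2 hweight)]
      using norm_mul_norm_sub_le a b u v
  have norm_gap : ‖u‖ ^ r - ‖v‖ ^ r ≤ alphaD r u v := by
    simpa only [norm_radialPow hr₀, alphaD_eq_norm_radialPow_sub]
      using norm_sub_norm_le (radialPow r u) (radialPow r v)
  rw [div_mul_eq_mul_div, div_mul_eq_mul_div, div_le_iff₀ (by linarith)]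
  calc r * a * ‖u - v‖ = r * (a * ‖u - v‖) := mul_assoc _ _ _
    _ ≤ r * (alphaD r u v + (a - b) * ‖v‖) := by gcongr
    _ = r * alphaD r u v + r * ((a - b) * ‖v‖) := mul_add _ _ _
    _ ≤ r * alphaD r u v + (r - 1) * (‖u‖ ^ r - ‖v‖ ^ r) := by
        gcongr r * alphaD r u v + ?_
        exact mul_rpow_sub_one_sub_rpow_sub_one_mul_le hr (norm_nonneg v) (norm_nonneg u)
    _ ≤ r * alphaD r u v + (r - 1) * alphaD r u v := by gcongr
    _ = alphaD r u v * (2 * r - 1) := by ring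

end AngularDistance

theorem stmt_12 {X : Type*} [NormedAddCommGroup X] [NormedSpace ℝ X]
    (p q : ℝ) (hq : q ≠ 0) (hpq : 1 ≤ p / q) (x y : X) (hx : x ≠ 0) (hy : y ≠ 0) :
    (p / (2 * p - q)) * max (‖x‖ ^ (p - q)) (‖y‖ ^ (p - q)) * alphaD q x y
      ≤ alphaD p x y ∧
    alphaD p x y ≤ (p / q) * max (‖x‖ ^ (p - q)) (‖y‖ ^ (p - q)) * alphaD q x y := by
  obtain ⟨r, rfl⟩ : ∃ r, p = q * r := ⟨p / q, (mul_div_cancel₀ p hq).symm⟩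
  rw [mul_div_cancel_left₀ r hq] at hpq ⊢
  have lower_constant : q * r / (2 * (q * r) - q) = r / (2 * r - 1) := by
    rw [← mul_div_mul_left r (2 * r - 1) hq]; ring_nf
  rw [lower_constant, ← norm_radialPow_rpow_sub_one hq, ← norm_radialPow_rpow_sub_one hq,
    ← alphaD_radialPow hq, alphaD_eq_norm_radialPow_sub q]
  exact ⟨div_mul_max_mul_norm_sub_le_alphaD hpq _ _, alphaD_le_mul_max_mul_norm_sub hpq _ _⟩
end
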